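/- Let 0 < μ < 1, k = p + (b+2)/2 ∉ {0, −1, −2, …} with Re(μk) ≥ 0, let −1 ≤ B₁ ≤ B₂ < A₂ ≤ A₁ ≤ 1, and let 0 ≤ λ₁ < λ₂ be real. Then N_{k,c}^0(λ₂, μ, (1+A₂z)/(1+B₂z)) ⊆ N_{k,c}^0(λ₁, μ, (1+A₁z)/(1+B₁z)). -/

import Mathlib

open Complex Set

noncomputable section

/-- The open unit disk in ℂ. -/
def unitDisk : Set ℂ := Metric.ball 0 1

/-- Pochhammer symbol `(x)_n = x (x+1) ⋯ (x+n-1)`. -/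
def poch (x : ℂ) (n : ℕ) : ℂ := ∏ i ∈ Finset.range n, (x + i)

/-- `k` is not a nonpositive integer `0, -1, -2, …`. -/
def NotNonposInt (k : ℂ) : Prop := ∀ n : ℕ, k ≠ -(n : ℂ)

/-- `a` is the coefficient sequence of a function `f(z) = z + ∑_{n≥2} a_n z^n`
in the class `A` of normalized analytic functions on the unit disk. -/
def InA (a : ℕ → ℂ) : Prop :=
  a 0 = 0 ∧ a 1 = 1 ∧ ∀ z ∈ unitDisk, Summable fun n => a n * z ^ n

/-- The generalized Struve convolution operator `S_k^c` applied to
`f(z) = z + ∑_{n≥2} a_n z^n`, namely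
`S_k^c f(z) = z + ∑_{n≥1} (-c/4)^n a_{n+1} z^{n+1} / ((3/2)_n (k)_n)`. -/
def struveOp (k c : ℂ) (a : ℕ → ℂ) (z : ℂ) : ℂ :=
  z + ∑' n : ℕ,
    (-c / 4) ^ (n + 1) / (poch (3 / 2) (n + 1) * poch k (n + 1)) * a (n + 2) * z ^ (n + 2)

/-- Subordination of analytic functions on the unit disk. -/
def Subord (f g : ℂ → ℂ) : Prop :=
  ∃ w : ℂ → ℂ, AnalyticOnNhd ℂ w unitDisk ∧ w 0 = 0 ∧ (∀ z ∈ unitDisk, ‖w z‖ < 1) ∧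
    ∀ z ∈ unitDisk, f z = g (w z)

/-- `(z / F z) ^ μ` (principal branch), with the removable singularity at `z = 0`
filled in with the value `1`. -/
def ratioPow (μ : ℝ) (F : ℂ → ℂ) (z : ℂ) : ℂ :=
  (if z = 0 then 1 else z / F z) ^ (μ : ℂ)

/-- `F z / G z`, with the removable singularity at `z = 0` filled in with value `1`. -/
def ratioQ (F G : ℂ → ℂ) (z : ℂ) : ℂ := if z = 0 then 1 else F z / G z

/-- The expression
`e^{iα} {(1+λ)(z/S_{k+1}f)^μ − λ (S_k f/S_{k+1} f)(z/S_{k+1} f)^μ}`. -/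
def Jfun (α : ℝ) (lam : ℂ) (μ : ℝ) (Sk Sk1 : ℂ → ℂ) (z : ℂ) : ℂ :=
  exp (α * I) * ((1 + lam) * ratioPow μ Sk1 z - lam * ratioQ Sk Sk1 z * ratioPow μ Sk1 z)

/-- Membership `f ∈ N_{k,c}^α(λ, μ, φ)` for `f(z) = z + ∑_{n≥2} a_n z^n`. -/
def memN (α : ℝ) (lam : ℂ) (μ : ℝ) (k c : ℂ) (φ : ℂ → ℂ) (a : ℕ → ℂ) : Prop :=
  Subord (Jfun α lam μ (struveOp k c a) (struveOp (k + 1) c a))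
    (fun z => (Real.cos α : ℂ) * φ z + (Real.sin α : ℂ) * I)

/-- `φ` is convex univalent on the unit disk. -/
def ConvexUnivalent (φ : ℂ → ℂ) : Prop :=
  AnalyticOnNhd ℂ φ unitDisk ∧ InjOn φ unitDisk ∧ Convex ℝ (φ '' unitDisk)

/-- `F z / z` is nonvanishing on the unit disk. -/
def Nonvan (F : ℂ → ℂ) : Prop := ∀ z ∈ unitDisk, z ≠ 0 → F z ≠ 0

/-- The Gaussian hypergeometric function `₂F₁(a,b,c;z)` (as a series). -/
def hyp2F1 (a b c z : ℂ) : ℂ :=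
  ∑' n : ℕ, poch a n * poch b n / (poch c n * (n.factorial : ℂ)) * z ^ n

/-!
Put `P = (z / S_{k+1} f)^μ`. The recurrence `z (S_{k+1} f / z)' = k (S_k f - S_{k+1} f) / z` turns
the defining expression of the class into `e^{iα} (P + (λ / (μ k)) z P')`. If for `λ = λ₂` this
takes its values in a convex domain `Ω`, then so does `e^{iα} P`, which is an average of these
values along the spiral `s ↦ z e^{-γ s}`, `γ = λ₂ / (μ k)` (Hallenbeck–Ruscheweyh). For
`λ₁ ∈ [0, λ₂]` the expression is a convex combination of the ones for `0` and `λ₂`, hence in `Ω` as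
well, and for univalent targets having values in the image is the same as subordination. Finally,
the image of a Janowski function is the disk or half-plane `|ζ - 1| < |A - B ζ|`, which is convex
and grows with `[B, A]`.
-/

open Filter Topology Metric

theorem lt_of_forall_sub_deriv_lt {u u' : ℝ → ℝ} {m C : ℝ}
    (hu : ∀ s, 0 ≤ s → HasDerivAt u (u' s) s) (hC : ∀ s, 0 ≤ s → u s ≤ C)
    (hm : ∀ s, 0 ≤ s → u s - u' s < m) : u 0 < m := by
  by_contra! hm0
  set g : ℝ → ℝ := fun s ↦ Real.exp (-s) * (u s - m) with hg
  have hg' (s : ℝ) (hs : 0 ≤ s) : HasDerivAt g (Real.exp (-s) * (m - (u s - u' s))) s := by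
    convert! (hasDerivAt_neg s).exp.mul ((hu s hs).sub_const m) using 1
    ring
  have hg_strictMono : StrictMonoOn g (Ici 0) := by
    refine strictMonoOn_of_deriv_pos (convex_Ici 0)
      (fun s hs ↦ (hg' s hs).continuousAt.continuousWithinAt) fun s hs ↦ ?_
    rw [interior_Ici, mem_Ioi] at hs
    rw [(hg' s hs.le).deriv]
    exact mul_pos (Real.exp_pos _) (sub_pos.2 (hm s hs.le))
  have hg_one : 0 < g 1 :=
    calc 0 ≤ g 0 := by simpa [hg] using hm0
      _ < g 1 := hg_strictMono self_mem_Ici (mem_Ici.2 zero_le_one) zero_lt_one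
  have hg_le (s : ℝ) (hs : 1 ≤ s) : g 1 ≤ Real.exp (-s) * (C - m) :=
    calc g 1 ≤ g s := hg_strictMono.monotoneOn (mem_Ici.2 zero_le_one) (mem_Ici.2 (by linarith)) hs
      _ ≤ Real.exp (-s) * (C - m) := by
        have := hC s (zero_le_one.trans hs)
        simp only [hg]
        gcongr
  have hlim : Tendsto (fun s ↦ Real.exp (-s) * (C - m)) atTop (𝓝 0) := by
    simpa using Real.tendsto_exp_neg_atTop_nhds_zero.mul_const (C - m)
  exact hg_one.not_ge (ge_of_tendsto hlim ((eventually_ge_atTop 1).mono hg_le))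

theorem norm_mul_exp_neg_mul_le {γ : ℂ} (hγ : 0 ≤ γ.re) (z : ℂ) {s : ℝ} (hs : 0 ≤ s) :
    ‖z * exp (-γ * s)‖ ≤ ‖z‖ := by
  have hexp : ‖exp (-γ * s)‖ ≤ 1 := by
    rw [norm_exp, Real.exp_le_one_iff, re_mul_ofReal, neg_re]
    exact mul_nonpos_of_nonpos_of_nonneg (neg_nonpos.2 hγ) hs
  simpa using mul_le_mul_of_nonneg_left hexp (norm_nonneg z)

-- Along the spiral `ζ s = z e^{-γ s}` one has `(p ∘ ζ)' = -γ ζ p'(ζ)`, so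
-- `p z = ∫₀^∞ e^{-s} (p + γ ζ p') (ζ s) ds` is an average of points of `Ω`.
theorem mem_of_add_smul_deriv_mem {E : Type*} [NormedAddCommGroup E] [NormedSpace ℂ E] {Ω : Set E}
    (hΩ : Convex ℝ Ω) (hΩ_open : IsOpen Ω) {γ : ℂ} (hγ : 0 ≤ γ.re) {r : ℝ} {p p' : ℂ → E}
    (hp : ∀ z ∈ ball 0 r, HasDerivAt p (p' z) z)
    (hmem : ∀ z ∈ ball 0 r, p z + γ • z • p' z ∈ Ω) {z : ℂ} (hz : z ∈ ball 0 r) : p z ∈ Ω := by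
  by_contra hpz
  obtain ⟨ℓ, hℓ⟩ := geometric_hahn_banach_open_point hΩ hΩ_open hpz
  set ζ : ℝ → ℂ := fun s ↦ z * exp (-γ * s) with hζ_def
  have hζ_norm {s : ℝ} (hs : 0 ≤ s) : ‖ζ s‖ ≤ ‖z‖ := norm_mul_exp_neg_mul_le hγ z hs
  have hball : closedBall 0 ‖z‖ ⊆ ball (0 : ℂ) r :=
    closedBall_subset_ball (mem_ball_zero_iff.1 hz)
  have hζ_mem {s : ℝ} (hs : 0 ≤ s) : ζ s ∈ closedBall 0 ‖z‖ :=
    mem_closedBall_zero_iff.2 (hζ_norm hs)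
  have hζ' (s : ℝ) : HasDerivAt ζ (-γ * ζ s) s := by
    convert! (((hasDerivAt_id s).ofReal_comp.const_mul (-γ)).cexp.const_mul z) using 1
    simp only [hζ_def, id_eq, ofReal_one]
    ring
  have hu (s : ℝ) (hs : 0 ≤ s) :
      HasDerivAt (fun s ↦ ℓ (p (ζ s))) (-ℓ (γ • ζ s • p' (ζ s))) s := by
    convert! ℓ.hasFDerivAt.comp_hasDerivAt s ((hp _ (hball (hζ_mem hs))).scomp s (hζ' s)) using 1
    simp [mul_smul]
  obtain ⟨C, hC⟩ : BddAbove ((fun w ↦ ℓ (p w)) '' closedBall 0 ‖z‖) :=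
    ((isCompact_closedBall _ _).image_of_continuousOn fun w hw ↦
      (ℓ.continuous.continuousAt.comp (hp w (hball hw)).continuousAt).continuousWithinAt).bddAbove
  have hlt : ℓ (p (ζ 0)) < ℓ (p z) :=
    lt_of_forall_sub_deriv_lt hu (fun s hs ↦ hC (mem_image_of_mem _ (hζ_mem hs))) fun s hs ↦ by
      simpa using hℓ _ (hmem _ (hball (hζ_mem hs)))
  simp [hζ_def] at hlt

/-! ### Univalent functions and subordination -/

theorem not_eventually_eq_of_injOn {X : Type*} {φ : ℂ → X} {U : Set ℂ} {z : ℂ} (hU : U ∈ 𝓝 z)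
    (hinj : InjOn φ U) : ¬∀ᶠ w in 𝓝 z, φ w = φ z := fun hconst ↦ by
  obtain ⟨w, ⟨hw, hwU⟩, hwz⟩ :=
    (((hconst.and hU).filter_mono nhdsWithin_le_nhds).and
      (self_mem_nhdsWithin (a := z) (s := {z}ᶜ))).exists
  exact hwz (hinj hwU (mem_of_mem_nhds hU) hw)

theorem nhds_le_map_nhds_of_injOn {φ : ℂ → ℂ} {U : Set ℂ} {z : ℂ} (hφ : AnalyticAt ℂ φ z)
    (hU : U ∈ 𝓝 z) (hinj : InjOn φ U) : 𝓝 (φ z) ≤ map φ (𝓝 z) :=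
  hφ.eventually_constant_or_nhds_le_map_nhds.resolve_left (not_eventually_eq_of_injOn hU hinj)

theorem eventually_deriv_ne_zero_of_injOn {φ : ℂ → ℂ} {U : Set ℂ} {z : ℂ} (hφ : AnalyticAt ℂ φ z)
    (hU : U ∈ 𝓝 z) (hinj : InjOn φ U) : ∀ᶠ w in 𝓝[≠] z, deriv φ w ≠ 0 := by
  refine hφ.deriv.eventually_eq_zero_or_eventually_ne_zero.resolve_left fun hzero ↦ ?_
  obtain ⟨ε, hε, hball⟩ := eventually_nhds_iff_ball.1 (hφ.eventually_analyticAt.and hzero)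
  refine not_eventually_eq_of_injOn hU hinj (eventually_of_mem (ball_mem_nhds z hε) fun w hw ↦ ?_)
  exact isOpen_ball.is_const_of_deriv_eq_zero (convex_ball z ε).isPreconnected
    (fun y hy ↦ (hball y hy).1.differentiableAt.differentiableWithinAt)
    (fun y hy ↦ (hball y hy).2) hw (mem_ball_self hε)

-- The inverse is continuous by the open mapping theorem and differentiable off the isolated
-- critical values, which are therefore removable.
theorem analyticAt_of_leftInvOn {φ ψ : ℂ → ℂ} {U : Set ℂ} (hU : IsOpen U)
    (hφ : AnalyticOnNhd ℂ φ U) (hψ : LeftInvOn ψ φ U) {z : ℂ} (hz : z ∈ U) :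
    AnalyticAt ℂ ψ (φ z) := by
  have hle {w : ℂ} (hw : w ∈ U) : 𝓝 (φ w) ≤ map φ (𝓝 w) :=
    nhds_le_map_nhds_of_injOn (hφ w hw) (hU.mem_nhds hw) hψ.injOn
  have hcont {w : ℂ} (hw : w ∈ U) : ContinuousAt ψ (φ w) := by
    have hψφ : ψ ∘ φ =ᶠ[𝓝 w] id := (hU.eventually_mem hw).mono fun y hy ↦ hψ hy
    rw [ContinuousAt, hψ hw]
    exact (tendsto_map'_iff.2 (tendsto_id.congr' hψφ.symm)).mono_left (hle hw)
  have hdiff {w : ℂ} (hw : w ∈ U) (hw' : deriv φ w ≠ 0) : DifferentiableAt ℂ ψ (φ w) := by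
    refine (HasDerivAt.of_local_left_inverse (f := φ) (hcont hw) ?_ hw' ?_).differentiableAt
    · rw [hψ hw]
      exact (hφ w hw).differentiableAt.hasDerivAt
    · exact hle hw ((hU.eventually_mem hw).mono fun y hy ↦ congrArg φ (hψ hy))
  refine analyticAt_of_differentiable_on_punctured_nhds_of_continuousAt ?_ (hcont hz)
  have hne := eventually_nhdsWithin_iff.1
    (eventually_deriv_ne_zero_of_injOn (hφ z hz) (hU.mem_nhds hz) hψ.injOn)
  refine eventually_nhdsWithin_iff.2 (hle hz (eventually_map.2 ?_))
  filter_upwards [hne, hU.eventually_mem hz] with w hw hwU hφw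
  exact hdiff hwU (hw fun h ↦ hφw (congrArg φ h))

theorem zero_mem_unitDisk : (0 : ℂ) ∈ unitDisk := mem_ball_self one_pos

theorem isOpen_unitDisk : IsOpen unitDisk := isOpen_ball

namespace Subord

variable {f g h : ℂ → ℂ}

theorem congr_left {f' : ℂ → ℂ} (hff' : EqOn f f' unitDisk) (hfg : Subord f g) : Subord f' g := by
  obtain ⟨w, hw, hw0, hw1, hfw⟩ := hfg
  exact ⟨w, hw, hw0, hw1, fun z hz ↦ (hff' hz).symm.trans (hfw z hz)⟩

theorem comp_left (hfg : Subord f g) (h : ℂ → ℂ) : Subord (h ∘ f) (h ∘ g) := by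
  obtain ⟨w, hw, hw0, hw1, hfw⟩ := hfg
  exact ⟨w, hw, hw0, hw1, fun z hz ↦ congrArg h (hfw z hz)⟩

theorem trans (hfg : Subord f g) (hgh : Subord g h) : Subord f h := by
  obtain ⟨v, hv, hv0, hv1, hfv⟩ := hfg
  obtain ⟨w, hw, hw0, hw1, hgw⟩ := hgh
  have hmaps : MapsTo v unitDisk unitDisk := fun z hz ↦ mem_ball_zero_iff.2 (hv1 z hz)
  refine ⟨w ∘ v, hw.comp hv hmaps, by simp [hv0, hw0], fun z hz ↦ hw1 _ (hmaps hz), fun z hz ↦ ?_⟩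
  rw [hfv z hz, hgw _ (hmaps hz), Function.comp_apply]

theorem mapsTo (hfg : Subord f g) : MapsTo f unitDisk (g '' unitDisk) := by
  obtain ⟨w, -, -, hw1, hfw⟩ := hfg
  exact fun z hz ↦ ⟨w z, mem_ball_zero_iff.2 (hw1 z hz), (hfw z hz).symm⟩

theorem apply_zero (hfg : Subord f g) : f 0 = g 0 := by
  obtain ⟨w, -, hw0, -, hfw⟩ := hfg
  rw [hfw 0 zero_mem_unitDisk, hw0]

theorem differentiableOn (hfg : Subord f g) (hg : DifferentiableOn ℂ g unitDisk) :
    DifferentiableOn ℂ f unitDisk := by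
  obtain ⟨w, hw, -, hw1, hfw⟩ := hfg
  exact (hg.comp hw.differentiableOn fun z hz ↦ mem_ball_zero_iff.2 (hw1 z hz)).congr hfw

theorem of_mapsTo_image (hf : DifferentiableOn ℂ f unitDisk) (hg : AnalyticOnNhd ℂ g unitDisk)
    (hg_inj : InjOn g unitDisk) (h0 : f 0 = g 0) (hmaps : MapsTo f unitDisk (g '' unitDisk)) :
    Subord f g := by
  set ψ := Function.invFunOn g unitDisk
  have hψ : LeftInvOn ψ g unitDisk := hg_inj.leftInvOn_invFunOn
  have hψ_an : AnalyticOnNhd ℂ ψ (g '' unitDisk) :=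
    forall_mem_image.2 fun z hz ↦ analyticAt_of_leftInvOn isOpen_unitDisk hg hψ hz
  refine ⟨ψ ∘ f, hψ_an.comp (hf.analyticOnNhd isOpen_unitDisk) hmaps, ?_, fun z hz ↦ ?_,
    fun z hz ↦ (Function.invFunOn_eq (hmaps hz)).symm⟩
  · rw [Function.comp_apply, h0, hψ zero_mem_unitDisk]
  · exact mem_ball_zero_iff.1 (Function.invFunOn_mem (hmaps hz))

end Subord

namespace ConvexUnivalent

variable {φ : ℂ → ℂ}

theorem isOpen_image (hφ : ConvexUnivalent φ) : IsOpen (φ '' unitDisk) := by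
  refine isOpen_iff_mem_nhds.2 (forall_mem_image.2 fun z hz ↦ ?_)
  have hD := isOpen_unitDisk.mem_nhds hz
  exact nhds_le_map_nhds_of_injOn (hφ.1 z hz) hD hφ.2.1 (image_mem_map hD)

theorem const_mul_add (hφ : ConvexUnivalent φ) {m : ℂ} (hm : m ≠ 0) (b : ℂ) :
    ConvexUnivalent fun z ↦ m * φ z + b := by
  refine ⟨(analyticOnNhd_const.mul hφ.1).add analyticOnNhd_const, fun z hz w hw h ↦ ?_, ?_⟩
  · exact hφ.2.1 hz hw (mul_left_cancel₀ hm (add_right_cancel h))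
  · have := (hφ.2.2.linear_image (LinearMap.mulLeft ℝ m)).translate b
    simpa [image_image, add_comm] using! this

theorem subord_add_mul_deriv (hφ : ConvexUnivalent φ) {p : ℂ → ℂ}
    (hp : DifferentiableOn ℂ p unitDisk) {γ₁ γ₂ : ℂ} (hγ₂ : 0 ≤ γ₂.re)
    (hγ₁ : γ₁ ∈ segment ℝ 0 γ₂) (h : Subord (fun z ↦ p z + γ₂ * (z * deriv p z)) φ) :
    Subord (fun z ↦ p z + γ₁ * (z * deriv p z)) φ := by
  have hp_mem : ∀ z ∈ unitDisk, p z ∈ φ '' unitDisk := fun z hz ↦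
    mem_of_add_smul_deriv_mem hφ.2.2 hφ.isOpen_image hγ₂
      (fun w hw ↦ (hp.differentiableAt (isOpen_unitDisk.mem_nhds hw)).hasDerivAt)
      (fun w hw ↦ h.mapsTo hw) hz
  have hp' : DifferentiableOn ℂ (deriv p) unitDisk := hp.deriv isOpen_unitDisk
  refine Subord.of_mapsTo_image (by fun_prop) hφ.1 hφ.2.1 ?_ fun z hz ↦ ?_
  · simpa using h.apply_zero
  · refine hφ.2.2.segment_subset (hp_mem z hz) (h.mapsTo hz) ?_
    obtain ⟨t, ht, rfl⟩ := segment_eq_image' ℝ 0 γ₂ ▸ hγ₁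
    rw [segment_eq_image']
    exact ⟨t, ht, by simp [mul_assoc]⟩

end ConvexUnivalent

theorem mul_deriv_cpow_const_of_isPreconnected {U : Set ℂ} (hU : IsOpen U)
    (hU_conn : IsPreconnected U) {g : ℂ → ℂ} {s : ℂ} (hg : DifferentiableOn ℂ g U)
    (hgs : DifferentiableOn ℂ (fun z ↦ g z ^ s) U) {z₀ : ℂ} (hz₀ : z₀ ∈ U)
    (hgz₀ : g z₀ ∈ slitPlane) {z : ℂ} (hz : z ∈ U) :
    g z * deriv (fun w ↦ g w ^ s) z = s * g z ^ s * deriv g z := by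
  have hga := hg.analyticOnNhd hU
  have hgsa := hgs.analyticOnNhd hU
  refine AnalyticOnNhd.eqOn_of_preconnected_of_eventuallyEq (hga.mul hgsa.deriv)
    ((analyticOnNhd_const.mul hgsa).mul hga.deriv) hU_conn hz₀ ?_ hz
  have hslit : ∀ᶠ z in 𝓝 z₀, g z ∈ slitPlane :=
    (hga z₀ hz₀).continuousAt.eventually_mem (isOpen_slitPlane.mem_nhds hgz₀)
  filter_upwards [hslit, hU.eventually_mem hz₀] with w hw hwU
  have hgw := (hga w hwU).differentiableAt.hasDerivAt
  have hgw0 := slitPlane_ne_zero hw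
  simp only [(hgw.cpow_const (c := s) hw).deriv, cpow_sub _ _ hgw0, cpow_one]
  field_simp

section PowerSeries

variable {b : ℕ → ℂ}

theorem exists_ball_summable_norm_mul_pow (hb : ∀ z ∈ unitDisk, Summable fun n ↦ b n * z ^ n)
    {z : ℂ} (hz : z ∈ unitDisk) :
    ∃ r : ℝ, z ∈ ball 0 r ∧ Summable fun n ↦ ‖b n‖ * r ^ n := by
  obtain ⟨r, hzr, hr1⟩ := exists_between (mem_ball_zero_iff.1 hz)
  have hr : 0 ≤ r := (norm_nonneg z).trans hzr.le
  refine ⟨r, mem_ball_zero_iff.2 hzr, ?_⟩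
  simpa [abs_of_nonneg hr] using (hb r (by simpa [unitDisk, abs_of_nonneg hr])).norm

theorem norm_mul_pow_le_of_mem_ball (b : ℕ → ℂ) {r : ℝ} (n : ℕ) (z : ℂ) (hz : z ∈ ball 0 r) :
    ‖b n * z ^ n‖ ≤ ‖b n‖ * r ^ n := by
  rw [norm_mul, norm_pow]
  gcongr
  exact (mem_ball_zero_iff.1 hz).le

theorem differentiableOn_tsum_mul_pow (hb : ∀ z ∈ unitDisk, Summable fun n ↦ b n * z ^ n) :
    DifferentiableOn ℂ (fun z ↦ ∑' n, b n * z ^ n) unitDisk := fun z hz ↦ by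
  obtain ⟨r, hzr, hr⟩ := exists_ball_summable_norm_mul_pow hb hz
  refine DifferentiableAt.differentiableWithinAt ?_
  exact (differentiableOn_tsum_of_summable_norm hr (fun n ↦ by fun_prop) isOpen_ball
    (norm_mul_pow_le_of_mem_ball b)).differentiableAt (isOpen_ball.mem_nhds hzr)

theorem hasSum_mul_deriv_tsum_mul_pow (hb : ∀ z ∈ unitDisk, Summable fun n ↦ b n * z ^ n)
    {z : ℂ} (hz : z ∈ unitDisk) :
    HasSum (fun n ↦ n * b n * z ^ n) (z * deriv (fun w ↦ ∑' n, b n * w ^ n) z) := by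
  obtain ⟨r, hzr, hr⟩ := exists_ball_summable_norm_mul_pow hb hz
  have hderiv := hasSum_deriv_of_summable_norm hr (fun n ↦ by fun_prop) isOpen_ball
    (norm_mul_pow_le_of_mem_ball b) hzr
  refine (hderiv.mul_left z).congr_fun fun n ↦ ?_
  rcases n with _ | n
  · simp
  · rw [deriv_const_mul_field, deriv_pow_field, Nat.add_sub_cancel]
    ring

end PowerSeries

/-! ### The Struve operator -/

theorem poch_succ (x : ℂ) (n : ℕ) : poch x (n + 1) = poch x n * (x + n) :=
  Finset.prod_range_succ _ n

theorem poch_succ' (x : ℂ) (n : ℕ) : poch x (n + 1) = x * poch (x + 1) n := by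
  simp only [poch, Finset.prod_range_succ', Nat.cast_zero, add_zero, Nat.cast_succ, add_assoc,
    add_comm (1 : ℂ), mul_comm x]

theorem poch_ne_zero {x : ℂ} (hx : NotNonposInt x) (n : ℕ) : poch x n ≠ 0 :=
  Finset.prod_ne_zero_iff.2 fun i _ h ↦ hx i (eq_neg_of_add_eq_zero_left h)

theorem NotNonposInt.ne_zero {x : ℂ} (hx : NotNonposInt x) : x ≠ 0 := by
  simpa using hx 0

theorem NotNonposInt.add_one {x : ℂ} (hx : NotNonposInt x) : NotNonposInt (x + 1) := fun n h ↦
  hx (n + 1) (by push_cast; linear_combination h)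

/-- The Taylor coefficients of the normalized generalized Struve function, by which `S_k^c`
multiplies those of `f`. -/
def struveCoeff (k c : ℂ) (n : ℕ) : ℂ := (-c / 4) ^ n / (poch (3 / 2) n * poch k n)

/-- The function `S_k^c f(z) / z`, with its removable singularity at `0` filled in. -/
def struveQuot (k c : ℂ) (a : ℕ → ℂ) (z : ℂ) : ℂ :=
  ∑' n, struveCoeff k c n * a (n + 1) * z ^ n

theorem struveCoeff_zero (k c : ℂ) : struveCoeff k c 0 = 1 := by simp [struveCoeff, poch]

theorem struveCoeff_succ (k c : ℂ) (n : ℕ) :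
    struveCoeff k c (n + 1) = -c / 4 / ((3 / 2 + n) * (k + n)) * struveCoeff k c n := by
  rw [struveCoeff, struveCoeff, poch_succ, poch_succ, pow_succ', div_mul_div_comm]
  congr 1
  ring

theorem natCast_mul_struveCoeff_add_one {k : ℂ} (hk : NotNonposInt k) (c : ℂ) (n : ℕ) :
    n * struveCoeff (k + 1) c n = k * (struveCoeff k c n - struveCoeff (k + 1) c n) := by
  have hpoch : poch k n * (k + n) = k * poch (k + 1) n := by rw [← poch_succ, poch_succ']
  have hk_ne := poch_ne_zero hk n
  have hk1_ne := poch_ne_zero hk.add_one n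
  have hcoeff : k * struveCoeff k c n = (k + n) * struveCoeff (k + 1) c n := by
    simp only [struveCoeff, div_mul_eq_div_div]
    field_simp
    rw [mul_right_comm, ← hpoch]
    ring
  linear_combination -hcoeff

theorem summable_struveCoeff (k c : ℂ) : Summable (struveCoeff k c) := by
  have htendsto : Tendsto (fun n : ℕ ↦ -c / 4 / ((3 / 2 + n) * (k + n))) atTop (𝓝 0) := by
    have hcobounded (x : ℂ) : Tendsto (fun n : ℕ ↦ x + n) atTop (Bornology.cobounded ℂ) :=
      (tendsto_const_add_cobounded x).comp tendsto_natCast_atTop_cobounded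
    have := ((tendsto_inv₀_cobounded.comp (hcobounded (3 / 2))).mul
      (tendsto_inv₀_cobounded.comp (hcobounded k))).const_mul (-c / 4)
    simpa [div_eq_mul_inv, mul_comm] using this
  refine summable_of_ratio_norm_eventually_le one_half_lt_one ?_
  filter_upwards [htendsto.norm.eventually_le_const (by simp : ‖(0 : ℂ)‖ < 1 / 2)] with n hn
  rw [struveCoeff_succ, norm_mul]
  gcongr

section StruveQuot

variable {a : ℕ → ℂ}

theorem summable_struveQuot (ha : InA a) (k c : ℂ) {z : ℂ} (hz : z ∈ unitDisk) :
    Summable fun n ↦ struveCoeff k c n * a (n + 1) * z ^ n := by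
  have hshift : Summable fun n ↦ a (n + 1) * z ^ n := by
    rcases eq_or_ne z 0 with rfl | hz0
    · exact summable_of_ne_finset_zero (s := {0}) fun n hn ↦ by simp_all
    · refine (((summable_nat_add_iff 1).2 (ha.2.2 z hz)).mul_left z⁻¹).congr fun n ↦ ?_
      field_simp
      ring
  exact (hshift.norm.mul_tendsto_const (summable_struveCoeff k c).tendsto_cofinite_zero).congr
    fun n ↦ by ring

theorem struveOp_eq_mul_struveQuot (ha : InA a) (k c : ℂ) {z : ℂ} (hz : z ∈ unitDisk) :
    struveOp k c a z = z * struveQuot k c a z := by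
  rw [struveQuot, (summable_struveQuot ha k c hz).tsum_eq_zero_add, mul_add, ← tsum_mul_left,
    struveOp]
  congr! 1
  · simp [struveCoeff_zero, ha.2.1]
  · exact tsum_congr fun n ↦ by rw [struveCoeff]; ring

theorem struveQuot_apply_zero (ha : a 1 = 1) (k c : ℂ) : struveQuot k c a 0 = 1 := by
  rw [struveQuot, tsum_eq_single 0 fun n hn ↦ by simp [hn]]
  simp [struveCoeff_zero, ha]

theorem differentiableOn_struveQuot (ha : InA a) (k c : ℂ) :
    DifferentiableOn ℂ (struveQuot k c a) unitDisk :=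
  differentiableOn_tsum_mul_pow fun _ ↦ summable_struveQuot ha k c

theorem mul_deriv_struveQuot_add_one (ha : InA a) {k : ℂ} (hk : NotNonposInt k) (c : ℂ) {z : ℂ}
    (hz : z ∈ unitDisk) :
    z * deriv (struveQuot (k + 1) c a) z = k * (struveQuot k c a z - struveQuot (k + 1) c a z) := by
  have hderiv := hasSum_mul_deriv_tsum_mul_pow (fun _ ↦ summable_struveQuot ha (k + 1) c) hz
  have hdiff := (((summable_struveQuot ha k c hz).hasSum.sub
    (summable_struveQuot ha (k + 1) c hz).hasSum).mul_left k)
  refine hderiv.unique (hdiff.congr_fun fun n ↦ ?_)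
  linear_combination a (n + 1) * z ^ n * natCast_mul_struveCoeff_add_one hk c n

end StruveQuot

/-! ### Janowski functions -/

/-- The Janowski function `z ↦ (1 + A z) / (1 + B z)`. -/
def janowski (A B : ℝ) (z : ℂ) : ℂ := (1 + A * z) / (1 + B * z)

section Janowski

variable {A B : ℝ} {z ζ : ℂ}

theorem one_add_mul_ne_zero_of_abs_le_one (hB : |B| ≤ 1) (hz : z ∈ unitDisk) :
    1 + B * z ≠ 0 := fun h ↦ by
  have hnorm : ‖(B : ℂ) * z‖ < 1 := by
    rw [norm_mul, norm_real, Real.norm_eq_abs]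
    nlinarith [mem_ball_zero_iff.1 hz, norm_nonneg z]
  rw [eq_neg_of_add_eq_zero_right h, norm_neg, norm_one] at hnorm
  exact hnorm.false

theorem janowski_sub_one (hz : 1 + B * z ≠ 0) :
    janowski A B z - 1 = (A - B) * z / (1 + B * z) := by
  rw [janowski, eq_div_iff hz, sub_mul, div_mul_cancel₀ _ hz]
  ring

theorem sub_mul_janowski (hz : 1 + B * z ≠ 0) :
    A - B * janowski A B z = (A - B) / (1 + B * z) := by
  rw [janowski, eq_div_iff hz, sub_mul, mul_assoc, div_mul_cancel₀ _ hz]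
  ring

theorem janowski_eq_iff (hAB : B ≠ A) (hz : 1 + B * z ≠ 0) :
    janowski A B z = ζ ↔ A - B * ζ ≠ 0 ∧ z = (ζ - 1) / (A - B * ζ) := by
  have hAB' : (A : ℂ) - B ≠ 0 := sub_ne_zero.2 (by exact_mod_cast hAB.symm)
  constructor
  · rintro rfl
    rw [janowski_sub_one hz, sub_mul_janowski hz]
    exact ⟨div_ne_zero hAB' hz, by rw [div_div_div_cancel_right₀ hz, mul_div_cancel_left₀ _ hAB']⟩
  · rintro ⟨hζ, rfl⟩
    rw [janowski, div_eq_iff hz]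
    linear_combination div_mul_cancel₀ (ζ - 1) hζ

theorem injOn_janowski (hB : |B| ≤ 1) (hAB : B ≠ A) : InjOn (janowski A B) unitDisk :=
  fun z hz w hw h ↦ by
    rw [((janowski_eq_iff hAB (one_add_mul_ne_zero_of_abs_le_one hB hz)).1 rfl).2,
      ((janowski_eq_iff hAB (one_add_mul_ne_zero_of_abs_le_one hB hw)).1 rfl).2, h]

theorem analyticOnNhd_janowski (hB : |B| ≤ 1) : AnalyticOnNhd ℂ (janowski A B) unitDisk :=
  fun z hz ↦ AnalyticAt.div (by fun_prop) (by fun_prop) (one_add_mul_ne_zero_of_abs_le_one hB hz)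

theorem janowski_image_unitDisk (hB : |B| ≤ 1) (hAB : B ≠ A) :
    janowski A B '' unitDisk = {ζ : ℂ | ‖ζ - 1‖ < ‖A - B * ζ‖} := by
  have hAB' : (A : ℂ) - B ≠ 0 := sub_ne_zero.2 (by exact_mod_cast hAB.symm)
  ext ζ
  constructor
  · rintro ⟨z, hz, rfl⟩
    have hz' := one_add_mul_ne_zero_of_abs_le_one hB hz
    simp only [mem_ofPred_eq, janowski_sub_one hz', sub_mul_janowski hz', norm_div, norm_mul]
    gcongr
    exact mul_lt_of_lt_one_right (norm_pos_iff.2 hAB') (mem_ball_zero_iff.1 hz)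
  · intro (hζ : ‖ζ - 1‖ < ‖A - B * ζ‖)
    have hpos : 0 < ‖A - B * ζ‖ := (norm_nonneg _).trans_lt hζ
    have hmem : (ζ - 1) / (A - B * ζ) ∈ unitDisk := by
      rwa [unitDisk, mem_ball_zero_iff, norm_div, div_lt_one hpos]
    exact ⟨_, hmem, (janowski_eq_iff hAB (one_add_mul_ne_zero_of_abs_le_one hB hmem)).2
      ⟨norm_pos_iff.1 hpos, rfl⟩⟩

theorem norm_sub_one_lt_norm_sub_mul_iff :
    ‖ζ - 1‖ < ‖A - B * ζ‖ ↔
      (1 - B ^ 2) * ‖ζ‖ ^ 2 + (1 - A ^ 2) < 2 * (1 - A * B) * ζ.re := by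
  rw [← sq_lt_sq₀ (norm_nonneg _) (norm_nonneg _)]
  simp only [← normSq_eq_norm_sq, normSq_apply, sub_re, sub_im, one_re, one_im, ofReal_re,
    ofReal_im, re_ofReal_mul, im_ofReal_mul]
  rw [← sub_pos, iff_comm, ← sub_pos]
  ring_nf

theorem convex_setOf_norm_sub_one_lt (hB : |B| ≤ 1) :
    Convex ℝ {ζ : ℂ | ‖ζ - 1‖ < ‖A - B * ζ‖} := by
  simp only [norm_sub_one_lt_norm_sub_mul_iff, ← sub_neg (b := 2 * (1 - A * B) * _)]
  have hB2 : 0 ≤ 1 - B ^ 2 := sub_nonneg.2 ((sq_le_one_iff_abs_le_one B).2 hB)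
  have hconv : ConvexOn ℝ univ fun ζ : ℂ ↦
      (1 - B ^ 2) * ‖ζ‖ ^ 2 + (1 - A ^ 2) - 2 * (1 - A * B) * ζ.re := by
    have hnorm : ConvexOn ℝ univ fun ζ : ℂ ↦ ‖ζ‖ ^ 2 :=
      (convexOn_norm convex_univ).pow (fun ζ _ ↦ norm_nonneg ζ) 2
    have hre : ConcaveOn ℝ univ fun ζ : ℂ ↦ 2 * (1 - A * B) * ζ.re :=
      ((2 * (1 - A * B)) • reLm).concaveOn convex_univ
    exact ((hnorm.smul hB2).add_const _).sub hre
  simpa using hconv.convex_lt 0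

theorem convexUnivalent_janowski (hB : |B| ≤ 1) (hAB : B ≠ A) :
    ConvexUnivalent (janowski A B) :=
  ⟨analyticOnNhd_janowski hB, injOn_janowski hB hAB,
    janowski_image_unitDisk hB hAB ▸ convex_setOf_norm_sub_one_lt hB⟩

theorem re_janowski_pos (hB : -1 ≤ B) (hAB : B < A) (hA : A ≤ 1) (hz : z ∈ unitDisk) :
    0 < (janowski A B z).re := by
  have hB' : |B| ≤ 1 := abs_le.2 ⟨hB, by linarith⟩
  have hmem : janowski A B z ∈ {ζ : ℂ | ‖ζ - 1‖ < ‖A - B * ζ‖} :=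
    janowski_image_unitDisk hB' hAB.ne ▸ mem_image_of_mem _ hz
  have hlt := norm_sub_one_lt_norm_sub_mul_iff.1 hmem
  have hA2 : 0 ≤ 1 - A ^ 2 := by nlinarith
  have hB2 : 0 ≤ 1 - B ^ 2 := by nlinarith
  refine pos_of_mul_pos_right (a := 2 * (1 - A * B)) ?_ (by nlinarith)
  linarith [mul_nonneg hB2 (sq_nonneg ‖janowski A B z‖)]

theorem sub_add_abs_mul_sub_mul_le {A₁ A₂ B₁ B₂ : ℝ} (hB₁ : -1 ≤ B₁) (hB : B₁ ≤ B₂)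
    (hBA : B₂ ≤ A₂) (hA : A₂ ≤ A₁) (hA₁ : A₁ ≤ 1) : (A₂ - B₂) + |A₁ * B₂ - A₂ * B₁| ≤ A₁ - B₁ := by
  suffices |A₁ * B₂ - A₂ * B₁| ≤ (A₁ - A₂) + (B₂ - B₁) by linarith
  have hB₂ : |B₂| ≤ 1 := abs_le.2 ⟨by linarith, by linarith⟩
  have hA₂ : |A₂| ≤ 1 := abs_le.2 ⟨by linarith, by linarith⟩
  calc |A₁ * B₂ - A₂ * B₁| = |(A₁ - A₂) * B₂ + A₂ * (B₂ - B₁)| := by ring_nf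
    _ ≤ (A₁ - A₂) * |B₂| + |A₂| * (B₂ - B₁) := by
      grw [abs_add_le, abs_mul, abs_mul, abs_of_nonneg (sub_nonneg.2 hA),
        abs_of_nonneg (sub_nonneg.2 hB)]
    _ ≤ (A₁ - A₂) + (B₂ - B₁) := by nlinarith

theorem subord_janowski {A₁ A₂ B₁ B₂ : ℝ} (hB₁ : -1 ≤ B₁) (hB : B₁ ≤ B₂) (hBA : B₂ < A₂)
    (hA : A₂ ≤ A₁) (hA₁ : A₁ ≤ 1) : Subord (janowski A₂ B₂) (janowski A₁ B₁) := by
  have hB₁' : |B₁| ≤ 1 := abs_le.2 ⟨hB₁, by linarith⟩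
  have hB₂' : |B₂| ≤ 1 := abs_le.2 ⟨by linarith, by linarith⟩
  refine Subord.of_mapsTo_image (analyticOnNhd_janowski hB₂').differentiableOn
    (analyticOnNhd_janowski hB₁') (injOn_janowski hB₁' (by linarith)) (by simp [janowski])
    fun z hz ↦ ?_
  have hz' := one_add_mul_ne_zero_of_abs_le_one hB₂' hz
  have hnum : ‖((A₂ : ℂ) - B₂) * z‖ < ‖(A₁ : ℂ) - B₁ + (A₁ * B₂ - A₂ * B₁ : ℝ) * z‖ := by
    have htri := norm_sub_le_norm_add ((A₁ - B₁ : ℝ) : ℂ) ((A₁ * B₂ - A₂ * B₁ : ℝ) * z)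
    rw [norm_mul, norm_real, norm_real, Real.norm_of_nonneg (by linarith), Real.norm_eq_abs,
      ofReal_sub] at htri
    rw [← ofReal_sub, norm_mul, norm_real, Real.norm_of_nonneg (by linarith)]
    have hlt : (A₂ - B₂ + |A₁ * B₂ - A₂ * B₁|) * ‖z‖ < A₁ - B₁ :=
      (mul_lt_of_lt_one_right (add_pos_of_pos_of_nonneg (sub_pos.2 hBA) (abs_nonneg _))
        (mem_ball_zero_iff.1 hz)).trans_le (sub_add_abs_mul_sub_mul_le hB₁ hB hBA.le hA hA₁)
    linarith
  have hsub : A₁ - B₁ * janowski A₂ B₂ z =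
      ((A₁ : ℂ) - B₁ + (A₁ * B₂ - A₂ * B₁ : ℝ) * z) / (1 + B₂ * z) := by
    rw [janowski, eq_div_iff hz', sub_mul, mul_assoc, div_mul_cancel₀ _ hz']
    push_cast
    ring
  rw [janowski_image_unitDisk hB₁' (by linarith), mem_ofPred_eq, janowski_sub_one hz', hsub,
    norm_div, norm_div]
  gcongr

end Janowski

theorem ofReal_mem_segment_zero {x y : ℝ} (hx : 0 ≤ x) (hxy : x ≤ y) :
    (x : ℂ) ∈ segment ℝ 0 (y : ℂ) := by
  rcases hx.eq_or_lt with rfl | hx0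
  · exact ofReal_zero ▸ left_mem_segment ℝ _ _
  · have hy : 0 < y := hx0.trans_le hxy
    rw [segment_eq_image']
    refine ⟨x / y, ⟨by positivity, (div_le_one hy).2 hxy⟩, ?_⟩
    simp [hy.ne']

theorem re_ofReal_div_nonneg {x : ℝ} (hx : 0 ≤ x) {w : ℂ} (hw : 0 ≤ w.re) :
    0 ≤ ((x : ℂ) / w).re := by
  rw [div_eq_mul_inv, re_ofReal_mul, inv_re]
  exact mul_nonneg hx (div_nonneg hw (normSq_nonneg w))

/-! ### The classes `N` -/

section Jfun

variable {a : ℕ → ℂ} {k c : ℂ} {α μ : ℝ} {z : ℂ}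

theorem ratioPow_struveOp (ha : InA a) (hz : z ∈ unitDisk) :
    ratioPow μ (struveOp k c a) z = (struveQuot k c a z)⁻¹ ^ (μ : ℂ) := by
  rcases eq_or_ne z 0 with rfl | hz0
  · simp [ratioPow, struveQuot_apply_zero ha.2.1]
  · rw [ratioPow, if_neg hz0, struveOp_eq_mul_struveQuot ha k c hz, div_mul_cancel_left₀ hz0]

theorem ratioQ_struveOp (ha : InA a) (l : ℂ) (hz : z ∈ unitDisk) :
    ratioQ (struveOp k c a) (struveOp l c a) z = struveQuot k c a z / struveQuot l c a z := by
  rcases eq_or_ne z 0 with rfl | hz0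
  · simp [ratioQ, struveQuot_apply_zero ha.2.1]
  · rw [ratioQ, if_neg hz0, struveOp_eq_mul_struveQuot ha k c hz,
      struveOp_eq_mul_struveQuot ha l c hz, mul_div_mul_left _ _ hz0]

theorem Jfun_eq_mul (lam : ℂ) (F G : ℂ → ℂ) :
    Jfun α lam μ F G z = exp (α * I) * (1 + lam * (1 - ratioQ F G z)) * ratioPow μ G z := by
  rw [Jfun]
  ring

theorem struveQuot_ne_zero_of_Jfun_ne_zero (ha : InA a) (hμ : μ ≠ 0) {lam : ℂ} {F : ℂ → ℂ}
    (hz : z ∈ unitDisk) (hJ : Jfun α lam μ F (struveOp k c a) z ≠ 0) :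
    struveQuot k c a z ≠ 0 := fun h ↦ by
  rw [Jfun_eq_mul, ratioPow_struveOp ha hz, h, inv_zero, zero_cpow (ofReal_ne_zero.2 hμ),
    mul_zero] at hJ
  exact hJ rfl

-- Differentiability is not automatic, as `ratioPow` uses the principal branch; here it comes from
-- dividing the holomorphic `Jfun` by the nonvanishing factor of `Jfun_eq_mul`.
theorem differentiableOn_ratioPow_struveOp (ha : InA a) (hμ : μ ≠ 0) {l lam : ℂ}
    (hJ : DifferentiableOn ℂ (Jfun α lam μ (struveOp k c a) (struveOp l c a)) unitDisk)
    (hJ0 : ∀ z ∈ unitDisk, Jfun α lam μ (struveOp k c a) (struveOp l c a) z ≠ 0) :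
    DifferentiableOn ℂ (ratioPow μ (struveOp l c a)) unitDisk := by
  have hQ : DifferentiableOn ℂ (ratioQ (struveOp k c a) (struveOp l c a)) unitDisk :=
    ((differentiableOn_struveQuot ha k c).div (differentiableOn_struveQuot ha l c) fun z hz ↦
      struveQuot_ne_zero_of_Jfun_ne_zero ha hμ hz (hJ0 z hz)).congr fun z ↦ ratioQ_struveOp ha l
  have hfactor : ∀ z ∈ unitDisk,
      exp (α * I) * (1 + lam * (1 - ratioQ (struveOp k c a) (struveOp l c a) z)) ≠ 0 :=
    fun z hz ↦ left_ne_zero_of_mul (Jfun_eq_mul lam _ _ ▸ hJ0 z hz)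
  refine (hJ.div (by fun_prop) hfactor).congr fun z hz ↦ ?_
  rw [Pi.div_apply, Jfun_eq_mul, mul_div_cancel_left₀ _ (hfactor z hz)]

theorem mul_deriv_ratioPow_struveOp (ha : InA a) (hk : NotNonposInt k)
    (hH : ∀ z ∈ unitDisk, struveQuot (k + 1) c a z ≠ 0)
    (hP : DifferentiableOn ℂ (ratioPow μ (struveOp (k + 1) c a)) unitDisk) (hz : z ∈ unitDisk) :
    z * deriv (ratioPow μ (struveOp (k + 1) c a)) z =
      μ * k * ((1 - ratioQ (struveOp k c a) (struveOp (k + 1) c a) z) *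
        ratioPow μ (struveOp (k + 1) c a) z) := by
  set H := struveQuot (k + 1) c a
  have hHd : DifferentiableOn ℂ H unitDisk := differentiableOn_struveQuot ha (k + 1) c
  have hP_eq : EqOn (ratioPow μ (struveOp (k + 1) c a)) (fun z ↦ (H z)⁻¹ ^ (μ : ℂ)) unitDisk :=
    fun z ↦ ratioPow_struveOp ha
  have hlog := mul_deriv_cpow_const_of_isPreconnected isOpen_unitDisk
    (convex_ball 0 1).isPreconnected (hHd.fun_inv hH) (hP.congr fun z hz ↦ (hP_eq hz).symm)
    zero_mem_unitDisk (by simp [H, struveQuot_apply_zero ha.2.1]) hz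
  have hinv : deriv (fun w ↦ (H w)⁻¹) z = -deriv H z / H z ^ 2 :=
    deriv_fun_inv'' (hHd.differentiableAt (isOpen_unitDisk.mem_nhds hz)) (hH z hz)
  have hP' : deriv (fun w ↦ (H w)⁻¹ ^ (μ : ℂ)) z =
      -μ * (H z)⁻¹ ^ (μ : ℂ) * (deriv H z / H z) := by
    refine mul_left_cancel₀ (inv_ne_zero (hH z hz)) (hlog.trans ?_)
    rw [hinv]
    ring
  have hrec : z * deriv H z = k * (struveQuot k c a z - H z) :=
    mul_deriv_struveQuot_add_one ha hk c hz
  rw [hP_eq.deriv isOpen_unitDisk hz, hP', hP_eq hz, ratioQ_struveOp ha _ hz,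
    one_sub_div (hH z hz)]
  linear_combination -μ * (H z)⁻¹ ^ (μ : ℂ) / H z * hrec

theorem Jfun_struveOp_eq_add_mul_deriv (ha : InA a) (hμ : μ ≠ 0) (hk : NotNonposInt k)
    (hH : ∀ z ∈ unitDisk, struveQuot (k + 1) c a z ≠ 0)
    (hP : DifferentiableOn ℂ (ratioPow μ (struveOp (k + 1) c a)) unitDisk) (lam : ℂ)
    (hz : z ∈ unitDisk) :
    Jfun α lam μ (struveOp k c a) (struveOp (k + 1) c a) z =
      exp (α * I) * ratioPow μ (struveOp (k + 1) c a) z + lam / (μ * k) *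
        (z * deriv (fun w ↦ exp (α * I) * ratioPow μ (struveOp (k + 1) c a) w) z) := by
  have hμ' : (μ : ℂ) ≠ 0 := ofReal_ne_zero.2 hμ
  have hk0 : k ≠ 0 := hk.ne_zero
  rw [deriv_const_mul_field, mul_left_comm z, mul_deriv_ratioPow_struveOp ha hk hH hP hz,
    Jfun_eq_mul]
  field_simp

end Jfun

theorem ConvexUnivalent.subord_Jfun_of_mem_segment {a : ℕ → ℂ} (ha : InA a) {k c : ℂ}
    (hk : NotNonposInt k) {α μ : ℝ} (hμ : μ ≠ 0) {lam₁ lam₂ : ℂ}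
    (hre : 0 ≤ (lam₂ / (μ * k)).re) (hlam : lam₁ ∈ segment ℝ 0 lam₂)
    {ψ : ℂ → ℂ} (hψ : ConvexUnivalent ψ) (hψ0 : ∀ z ∈ unitDisk, ψ z ≠ 0)
    (h : Subord (Jfun α lam₂ μ (struveOp k c a) (struveOp (k + 1) c a)) ψ) :
    Subord (Jfun α lam₁ μ (struveOp k c a) (struveOp (k + 1) c a)) ψ := by
  have hJ0 : ∀ z ∈ unitDisk, Jfun α lam₂ μ (struveOp k c a) (struveOp (k + 1) c a) z ≠ 0 :=
    fun z hz ↦ by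
      obtain ⟨w, hw, hwz⟩ := h.mapsTo hz
      exact hwz ▸ hψ0 w hw
  have hH : ∀ z ∈ unitDisk, struveQuot (k + 1) c a z ≠ 0 := fun z hz ↦
    struveQuot_ne_zero_of_Jfun_ne_zero ha hμ hz (hJ0 z hz)
  have hP : DifferentiableOn ℂ (ratioPow μ (struveOp (k + 1) c a)) unitDisk :=
    differentiableOn_ratioPow_struveOp ha hμ (h.differentiableOn hψ.1.differentiableOn) hJ0
  have hJ_eq (lam : ℂ) := fun z ↦
    Jfun_struveOp_eq_add_mul_deriv (α := α) (z := z) ha hμ hk hH hP lam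
  have hseg : lam₁ / (μ * k) ∈ segment ℝ 0 (lam₂ / (μ * k)) := by
    obtain ⟨t, ht, rfl⟩ := segment_eq_image' ℝ 0 lam₂ ▸ hlam
    rw [segment_eq_image']
    exact ⟨t, ht, by simp [mul_div_assoc]⟩
  exact (hψ.subord_add_mul_deriv (by fun_prop) hre hseg (h.congr_left (hJ_eq lam₂))).congr_left
    fun z hz ↦ (hJ_eq lam₁ z hz).symm

theorem classN_inclusion_janowski_general {a : ℕ → ℂ} (ha : InA a) {k c : ℂ}
    (hk : NotNonposInt k) {α μ : ℝ} (hα : |α| < Real.pi / 2) (hμ : μ ≠ 0) {lam₁ lam₂ : ℂ}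
    (hre : 0 ≤ (lam₂ / (μ * k)).re) (hlam : lam₁ ∈ segment ℝ 0 lam₂) {φ₁ φ₂ : ℂ → ℂ}
    (hφ₂ : ConvexUnivalent φ₂) (hφ₂_re : ∀ z ∈ unitDisk, 0 < (φ₂ z).re) (hφ : Subord φ₂ φ₁)
    (h : memN α lam₂ μ k c φ₂ a) : memN α lam₁ μ k c φ₁ a := by
  have hcos : 0 < Real.cos α := Real.cos_pos_of_mem_Ioo (abs_lt.1 hα)
  have hψ := hφ₂.const_mul_add (ofReal_ne_zero.2 hcos.ne') (Real.sin α * I)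
  have hψ0 : ∀ z ∈ unitDisk, Real.cos α * φ₂ z + Real.sin α * I ≠ 0 := fun z hz h0 ↦ by
    have hre0 := congrArg re h0
    rw [add_re, re_ofReal_mul, re_ofReal_mul, I_re, mul_zero, add_zero, zero_re] at hre0
    exact (mul_pos hcos (hφ₂_re z hz)).ne' hre0
  exact (hψ.subord_Jfun_of_mem_segment ha hk hμ hre hlam hψ0 h).trans
    (hφ.comp_left fun ζ ↦ Real.cos α * ζ + Real.sin α * I)

/-- the inclusion
`N_{k,c}^0(λ₂, μ, (1+A₂z)/(1+B₂z)) ⊆ N_{k,c}^0(λ₁, μ, (1+A₁z)/(1+B₁z))`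
for `-1 ≤ B₁ ≤ B₂ < A₂ ≤ A₁ ≤ 1` and `0 ≤ λ₁ < λ₂`. -/
theorem classN_inclusion_janowski (μ : ℝ) (k c : ℂ) (A₁ A₂ B₁ B₂ lam₁ lam₂ : ℝ)
    (hμ0 : 0 < μ) (hμ1 : μ < 1)
    (hk : NotNonposInt k) (hre : 0 ≤ ((μ : ℂ) * k).re)
    (hB1 : -1 ≤ B₁) (hB12 : B₁ ≤ B₂) (hBA2 : B₂ < A₂) (hA21 : A₂ ≤ A₁) (hA1 : A₁ ≤ 1)
    (hlam1 : 0 ≤ lam₁) (hlam12 : lam₁ < lam₂) :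
    ∀ a : ℕ → ℂ, InA a →
      memN 0 (lam₂ : ℂ) μ k c
          (fun z => (1 + (A₂ : ℂ) * z) / (1 + (B₂ : ℂ) * z)) a →
        memN 0 (lam₁ : ℂ) μ k c
          (fun z => (1 + (A₁ : ℂ) * z) / (1 + (B₁ : ℂ) * z)) a := by
  intro a ha h
  exact classN_inclusion_janowski_general ha hk (by simp [Real.pi_pos]) hμ0.ne'
    (re_ofReal_div_nonneg (hlam1.trans hlam12.le) hre)
    (ofReal_mem_segment_zero hlam1 hlam12.le)
    (convexUnivalent_janowski (abs_le.2 ⟨hB1.trans hB12, by linarith⟩) hBA2.ne)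
    (fun _ ↦ re_janowski_pos (hB1.trans hB12) hBA2 (hA21.trans hA1))
    (subord_janowski hB1 hB12 hBA2 hA21 hA1) h
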